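/- arXiv:1607.00714 — 4 statements merged into one kernel-verified Lean document; each statement's English description precedes it below -/
import Mathlib

section
/- Assume m_1 + … + m_h < n. Then there exists exactly one vector s = (s_1,…,s_h) with all s_i > 0 satisfying D_i(s) = m_i for every i = 1,…,h; consequently the quantities π_{k,i} = p_k^{ht(i)} s_i / (1 + Σ_{j=1}^h p_k^{ht(j)} s_j) are uniquely determined and satisfy Σ_{k=1}^n π_{k,i} = m_i for every i. -/
/-!
The argument works for an arbitrary array of positive weights `a k i` in place of `p k ^ ht i`.
The equations `D_i(s) = m_i` say that `s` is a fixed point of the monotone map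
`F(s)_i = m_i / ∑ k, a k i / (1 + ∑ j, a k j * s j)`.

Existence is the Knaster–Tarski argument: the supremum of `{s ≥ 0 | s ≤ F s}` is a fixed point as
soon as this set is bounded above. If `s ≤ F s`, then summing `D_i(s) ≤ m_i` over `i` gives
`∑ k, A_k / (1 + A_k) ≤ ∑ i, m i < n` with `A_k = ∑ j, a k j * s j`; a large coordinate of `s` would
make every `A_k` large and the left-hand side close to `n`, so `s` is bounded
(`le_of_subsolution`). Fixed points are positive because `F` takes positive values.

Uniqueness is a scaling argument (`le_of_solutions`): for two positive solutions `s`, `t`, take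
`i` maximizing `r = t i / s i`. If `r > 1`, then `t ≤ r • s` and `t i = r * s i` give
`D_i(t) ≥ D_i(r • s) > D_i(s)`, a contradiction; so `t ≤ s`, and symmetrically `s ≤ t`.
-/

open Finset Filter

/-- `D_i(s) = Σ_{k=1}^n p_k^{ht(i)} s_i / (1 + Σ_{j=1}^h p_k^{ht(j)} s_j)`.
Lists `1,…,h` are indexed by `i : Fin h` (index `i` stands for list `i+1`). -/
noncomputable def Dfun (n h : ℕ) (p : Fin n → ℝ) (ht : Fin h → ℕ) (s : Fin h → ℝ)
    (i : Fin h) : ℝ :=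
  ∑ k, p k ^ ht i * s i / (1 + ∑ j, p k ^ ht j * s j)

/-- Flat height function on lists `1,…,h` (index `i : Fin h` stands for list `i+1`):
`ht_F(i) = i` for `i ≤ h_N` and `ht_F(i) = i − h_N` for `i > h_N`. -/
def htFlat (h hN : ℕ) : Fin h → ℕ :=
  fun i => if i.val + 1 ≤ hN then i.val + 1 else i.val + 1 - hN

/-- Layered height function on lists `1,…,h`: `ht_L(i) = i`. -/
def htLayer (h : ℕ) : Fin h → ℕ := fun i => i.val + 1

section PositiveWeights

variable {κ ι : Type*} [Fintype κ] [Fintype ι]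

/-- The map `F(s)_i = m_i / ∑ k, a k i / (1 + ∑ j, a k j * s j)`, whose fixed points in the
nonnegative orthant are, for positive weights and nonempty `κ`, the nonnegative solutions of
`D_i(s) = m_i`. -/
noncomputable def fixMap (a : κ → ι → ℝ) (m : ι → ℝ) (s : ι → ℝ) (i : ι) : ℝ :=
  m i / ∑ k, a k i / (1 + ∑ j, a k j * s j)

lemma one_add_sum_pos {a : κ → ι → ℝ} (ha : ∀ k i, 0 < a k i) {s : ι → ℝ} (hs : ∀ i, 0 ≤ s i)
    (k : κ) : 0 < 1 + ∑ j, a k j * s j := by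
  have : 0 ≤ ∑ j, a k j * s j := Finset.sum_nonneg fun j _ => mul_nonneg (ha k j).le (hs j)
  linarith

lemma fixMap_denom_pos [Nonempty κ] {a : κ → ι → ℝ} (ha : ∀ k i, 0 < a k i) {s : ι → ℝ}
    (hs : ∀ i, 0 ≤ s i) (i : ι) : 0 < ∑ k, a k i / (1 + ∑ j, a k j * s j) :=
  Finset.sum_pos (fun k _ => div_pos (ha k i) (one_add_sum_pos ha hs k)) Finset.univ_nonempty

lemma fixMap_mono [Nonempty κ] {a : κ → ι → ℝ} (ha : ∀ k i, 0 < a k i) {m : ι → ℝ}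
    (hm : ∀ i, 0 < m i) {s t : ι → ℝ} (hs : ∀ i, 0 ≤ s i) (hst : ∀ i, s i ≤ t i) (i : ι) :
    fixMap a m s i ≤ fixMap a m t i := by
  have ht : ∀ i, 0 ≤ t i := fun i => (hs i).trans (hst i)
  refine div_le_div_of_nonneg_left (hm i).le (fixMap_denom_pos ha ht i) ?_
  refine Finset.sum_le_sum fun k _ => ?_
  refine div_le_div_of_nonneg_left (ha k i).le (one_add_sum_pos ha hs k) ?_
  have : ∑ j, a k j * s j ≤ ∑ j, a k j * t j :=
    Finset.sum_le_sum fun j _ => mul_le_mul_of_nonneg_left (hst j) (ha k j).le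
  linarith

lemma sum_eq_mul_denom (a : κ → ι → ℝ) (s : ι → ℝ) (i : ι) :
    ∑ k, a k i * s i / (1 + ∑ j, a k j * s j)
      = s i * ∑ k, a k i / (1 + ∑ j, a k j * s j) := by
  rw [Finset.mul_sum]
  exact Finset.sum_congr rfl fun k _ => by ring

/-- A priori bound on vectors with `s ≤ F s`, in terms of a lower bound `c` on the weights. This is
where `∑ i, m i < n` enters. -/
lemma le_of_subsolution [Nonempty κ] {a : κ → ι → ℝ} {c : ℝ} (hc : 0 < c)
    (hca : ∀ k i, c ≤ a k i) {m : ι → ℝ}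
    (hmn : ∑ i, m i < (Fintype.card κ : ℝ)) {s : ι → ℝ} (hs : ∀ i, 0 ≤ s i)
    (hsF : ∀ i, s i ≤ fixMap a m s i) (i : ι) :
    s i ≤ (∑ i, m i) / (c * (Fintype.card κ - ∑ i, m i)) := by
  have ha : ∀ k i, 0 < a k i := fun k i => hc.trans_le (hca k i)
  have hD : ∀ i, ∑ k, a k i * s i / (1 + ∑ j, a k j * s j) ≤ m i := fun i => by
    rw [sum_eq_mul_denom]
    exact (le_div_iff₀ (fixMap_denom_pos ha hs i)).1 (hsF i)
  have hsum : ∑ k, (∑ j, a k j * s j) / (1 + ∑ j, a k j * s j) ≤ ∑ i, m i := by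
    calc _ = ∑ i, ∑ k, a k i * s i / (1 + ∑ j, a k j * s j) := by
          rw [Finset.sum_comm]
          exact Finset.sum_congr rfl fun k _ => Finset.sum_div _ _ _
      _ ≤ _ := Finset.sum_le_sum fun i _ => hD i
  have hx : 0 ≤ c * s i := mul_nonneg hc.le (hs i)
  -- `x ↦ x / (1 + x)` is increasing and every `A_k` is at least `c * s i`.
  have hlow : ∀ k, c * s i / (1 + c * s i)
      ≤ (∑ j, a k j * s j) / (1 + ∑ j, a k j * s j) := fun k => by
    have h1 : c * s i ≤ ∑ j, a k j * s j :=
      (mul_le_mul_of_nonneg_right (hca k i) (hs i)).trans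
        (Finset.single_le_sum (f := fun j => a k j * s j)
          (fun j _ => mul_nonneg (ha k j).le (hs j)) (Finset.mem_univ i))
    rw [div_le_div_iff₀ (by linarith) (one_add_sum_pos ha hs k)]
    linarith
  have hcard : Fintype.card κ * (c * s i / (1 + c * s i)) ≤ ∑ i, m i := by
    have := (Finset.sum_le_sum fun k (_ : k ∈ Finset.univ) => hlow k).trans hsum
    simpa using this
  rw [← mul_div_assoc, div_le_iff₀ (by linarith)] at hcard
  rw [le_div_iff₀ (mul_pos hc (by linarith))]
  linarith

/-- Any positive solution dominates any other one, by scaling. -/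
lemma le_of_solutions [Nonempty κ] {a : κ → ι → ℝ} (ha : ∀ k i, 0 < a k i) {m : ι → ℝ}
    {s t : ι → ℝ} (hs : ∀ i, 0 < s i) (ht : ∀ i, 0 < t i)
    (hsm : ∀ i, ∑ k, a k i * s i / (1 + ∑ j, a k j * s j) = m i)
    (htm : ∀ i, ∑ k, a k i * t i / (1 + ∑ j, a k j * t j) = m i) (l : ι) : t l ≤ s l := by
  have : Nonempty ι := ⟨l⟩
  obtain ⟨i, hi⟩ := Finite.exists_max fun i => t i / s i
  by_contra hlt
  push Not at hlt
  set r := t i / s i with hr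
  have hr1 : 1 < r := ((one_lt_div (hs l)).2 hlt).trans_le (hi l)
  have hti : t i = r * s i := by rw [hr, div_mul_cancel₀ _ (hs i).ne']
  have htr : ∀ j, t j ≤ r * s j := fun j => (div_le_iff₀ (hs j)).1 (hi j)
  refine (lt_irrefl (m i)) ?_
  calc m i = ∑ k, a k i * s i / (1 + ∑ j, a k j * s j) := (hsm i).symm
    _ < ∑ k, a k i * t i / (1 + ∑ j, a k j * t j) := by
      refine Finset.sum_lt_sum_of_nonempty Finset.univ_nonempty fun k _ => ?_
      have hA : ∑ j, a k j * t j ≤ r * ∑ j, a k j * s j := by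
        rw [Finset.mul_sum]
        refine Finset.sum_le_sum fun j _ => ?_
        have := mul_le_mul_of_nonneg_left (htr j) (ha k j).le
        linarith
      rw [div_lt_div_iff₀ (one_add_sum_pos ha (fun j => (hs j).le) k)
        (one_add_sum_pos ha (fun j => (ht j).le) k), hti, mul_left_comm, mul_comm r, mul_assoc]
      have hp : 0 < a k i * s i := mul_pos (ha k i) (hs i)
      nlinarith
    _ = m i := htm i

lemma exists_solution [Nonempty κ] [Nonempty ι] {a : κ → ι → ℝ} (ha : ∀ k i, 0 < a k i)
    {m : ι → ℝ} (hm : ∀ i, 0 < m i) (hmn : ∑ i, m i < (Fintype.card κ : ℝ)) :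
    ∃ s : ι → ℝ, (∀ i, 0 < s i) ∧
      ∀ i, ∑ k, a k i * s i / (1 + ∑ j, a k j * s j) = m i := by
  obtain ⟨q, hq⟩ := Finite.exists_min fun q : κ × ι => a q.1 q.2
  let S : Set (ι → ℝ) := {s | (∀ i, 0 ≤ s i) ∧ ∀ i, s i ≤ fixMap a m s i}
  have hFpos : ∀ s : ι → ℝ, (∀ i, 0 ≤ s i) → ∀ i, 0 < fixMap a m s i := fun s hs i =>
    div_pos (hm i) (fixMap_denom_pos ha hs i)
  have h0 : (0 : ι → ℝ) ∈ S :=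
    ⟨fun _ => le_rfl, fun i => (hFpos 0 (fun _ => le_rfl) i).le⟩
  have hbdd : BddAbove S := ⟨fun _ => _, fun s hs i =>
    le_of_subsolution (ha q.1 q.2) (fun k i => hq (k, i)) hmn hs.1 hs.2 i⟩
  obtain ⟨s, hs⟩ : ∃ s, IsLUB S s := ⟨sSup S, isLUB_csSup ⟨0, h0⟩ hbdd⟩
  have hs0 : ∀ i, 0 ≤ s i := fun i => hs.1 h0 i
  have hle : s ≤ fixMap a m s := hs.2 fun t ht i =>
    (ht.2 i).trans (fixMap_mono ha hm ht.1 (hs.1 ht) i)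
  have hge : fixMap a m s ≤ s :=
    hs.1 ⟨fun i => (hFpos s hs0 i).le, fun i => fixMap_mono ha hm hs0 hle i⟩
  have heq : ∀ i, s i = fixMap a m s i := fun i => le_antisymm (hle i) (hge i)
  refine ⟨s, fun i => heq i ▸ hFpos s hs0 i, fun i => ?_⟩
  rw [sum_eq_mul_denom]
  exact (eq_div_iff (fixMap_denom_pos ha hs0 i).ne').1 (heq i)

end PositiveWeights

/-- there is exactly one positive vector `s` with `D_i(s) = m_i` for all `i`;
consequently the quantities `π_{k,i} = p_k^{ht(i)} s_i/(1+Σ_j p_k^{ht(j)} s_j)` are uniquely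
determined and satisfy `Σ_k π_{k,i} = m_i`. -/
theorem fixed_point_exists_unique
    (n h hN : ℕ) (hn : 2 ≤ n) (hh : 2 ≤ h) (hN1 : 1 ≤ hN) (hNh : hN < h)
    (ht : Fin h → ℕ) (hht : ht = htFlat h hN ∨ ht = htLayer h)
    (p : Fin n → ℝ) (hp : ∀ k, 0 < p k)
    (m : Fin h → ℝ) (hm : ∀ i, 0 < m i) (hmn : ∑ i, m i < (n : ℝ)) :
    ∃! s : Fin h → ℝ, (∀ i, 0 < s i) ∧
      ∀ i, (∑ k, p k ^ ht i * s i / (1 + ∑ j, p k ^ ht j * s j)) = m i := by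
  have : Nonempty (Fin n) := ⟨⟨0, by omega⟩⟩
  have : Nonempty (Fin h) := ⟨⟨0, by omega⟩⟩
  have ha : ∀ (k : Fin n) (i : Fin h), 0 < p k ^ ht i := fun k i => pow_pos (hp k) _
  obtain ⟨s, hs, hsm⟩ := exists_solution (a := fun k i => p k ^ ht i) ha hm (by simpa using hmn)
  refine ⟨s, ⟨hs, hsm⟩, fun t ⟨ht0, htm⟩ => funext fun i => le_antisymm ?_ ?_⟩
  · exact le_of_solutions (a := fun k i => p k ^ ht i) ha hs ht0 hsm htm i
  · exact le_of_solutions (a := fun k i => p k ^ ht i) ha ht0 hs htm hsm i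
end

section
/- Assume m_1 + … + m_h < n. Then the set { s ∈ [0,∞)^h : D_i(s) ≤ m_i for all i = 1,…,h } is bounded. -/
/-!
Write `S_k = ∑ j, p_k ^ ht(j) * s_j`. Exchanging the two sums gives
`∑ i, D_i(s) = ∑ k, S_k / (1 + S_k) = n - ∑ k, 1 / (1 + S_k)` (`sum_Dfun`). So if `D_i(s) ≤ m_i`
for all `i`, then `∑ k, 1 / (1 + S_k) ≥ δ := n - ∑ i, m_i > 0`, and some `k` has
`1 / (1 + S_k) ≥ δ / n`, that is `S_k ≤ n / δ`. Since `p_k ^ ht(i) * s_i ≤ S_k`, each `s_i` is at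
most `n / δ / p_k ^ ht(i)`, and summing over `k` gives a bound independent of `s`.
-/

open Finset Filter

theorem sum_Dfun (n h : ℕ) (p : Fin n → ℝ) (ht : Fin h → ℕ) (s : Fin h → ℝ)
    (hp : ∀ k, 0 < p k) (hs : ∀ i, 0 ≤ s i) :
    ∑ i, Dfun n h p ht s i = ∑ k, (1 - 1 / (1 + ∑ j, p k ^ ht j * s j)) := by
  unfold Dfun
  rw [Finset.sum_comm]
  refine Finset.sum_congr rfl fun k _ => ?_
  have hS : 0 ≤ ∑ j, p k ^ ht j * s j :=
    Finset.sum_nonneg fun j _ => mul_nonneg (pow_pos (hp k) _).le (hs j)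
  rw [← Finset.sum_div]
  field_simp
  ring

/-- if `m_1 + ⋯ + m_h < n`, the set of nonnegative vectors `s` with
`D_i(s) ≤ m_i` for all `i` is bounded. -/
theorem sublevel_set_bounded
    (n h hN : ℕ) (hn : 2 ≤ n) (hh : 2 ≤ h) (hN1 : 1 ≤ hN) (hNh : hN < h)
    (ht : Fin h → ℕ) (hht : ht = htFlat h hN ∨ ht = htLayer h)
    (p : Fin n → ℝ) (hp : ∀ k, 0 < p k)
    (m : Fin h → ℝ) (hm : ∀ i, 0 < m i) (hmn : ∑ i, m i < (n : ℝ)) :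
    Bornology.IsBounded
      {s : Fin h → ℝ | (∀ i, 0 ≤ s i) ∧ ∀ i, Dfun n h p ht s i ≤ m i} := by
  obtain ⟨δ, hδ⟩ : ∃ δ, δ = (n : ℝ) - ∑ i, m i := ⟨_, rfl⟩
  have hδ0 : 0 < δ := by linarith
  have hn0 : (0 : ℝ) < n := by exact_mod_cast (by omega : 0 < n)
  refine (Metric.isBounded_Icc (0 : Fin h → ℝ)
    (fun i => ∑ k, n / δ / p k ^ ht i)).subset ?_
  rintro s ⟨hs, hD⟩
  refine ⟨hs, fun i => ?_⟩
  have hterm : ∀ k j, 0 ≤ p k ^ ht j * s j := fun k j =>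
    mul_nonneg (pow_pos (hp k) _).le (hs j)
  have hsum : δ ≤ ∑ k, 1 / (1 + ∑ j, p k ^ ht j * s j) := by
    have h1 : ∑ i, Dfun n h p ht s i ≤ ∑ i, m i := Finset.sum_le_sum fun i _ => hD i
    rw [sum_Dfun n h p ht s hp hs, Finset.sum_sub_distrib] at h1
    simp only [Finset.sum_const, Finset.card_univ, Fintype.card_fin, nsmul_eq_mul, mul_one] at h1
    linarith
  obtain ⟨k, -, hk⟩ : ∃ k ∈ (Finset.univ : Finset (Fin n)),
      δ / n ≤ 1 / (1 + ∑ j, p k ^ ht j * s j) := by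
    refine Finset.exists_le_of_sum_le ⟨⟨0, by omega⟩, Finset.mem_univ _⟩ ?_
    simp only [Finset.sum_const, Finset.card_univ, Fintype.card_fin, nsmul_eq_mul]
    rwa [mul_div_cancel₀ _ hn0.ne']
  have hS : 0 ≤ ∑ j, p k ^ ht j * s j := Finset.sum_nonneg fun j _ => hterm k j
  have hle : p k ^ ht i * s i ≤ ∑ j, p k ^ ht j * s j :=
    Finset.single_le_sum (f := fun j => p k ^ ht j * s j) (fun j _ => hterm k j)
      (Finset.mem_univ i)
  have hb : ∑ j, p k ^ ht j * s j ≤ n / δ := by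
    rw [div_le_div_iff₀ hn0 (by linarith)] at hk
    rw [le_div_iff₀ hδ0]
    nlinarith
  calc s i ≤ n / δ / p k ^ ht i := by
        rw [le_div_iff₀ (pow_pos (hp k) _)]
        linarith
    _ ≤ ∑ k, n / δ / p k ^ ht i :=
        Finset.single_le_sum (f := fun k => (n : ℝ) / δ / p k ^ ht i)
          (fun k _ => div_nonneg (div_pos hn0 hδ0).le (pow_pos (hp k) _).le) (Finset.mem_univ k)
end

section
/- Fix i ∈ {1,…,h} and s ∈ [0,∞)^h. The map y ↦ D_i(s_1,…,s_{i−1}, y, s_{i+1},…,s_h) is continuous and strictly increasing on [0,∞), takes the value 0 at y = 0, and tends to n as y → ∞. Consequently, for every real m_i with 0 < m_i < n there is a unique y > 0 (denoted G_i(s)) with D_i(s_1,…,s_{i−1}, y, s_{i+1},…,s_h) = m_i. -/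
/-!
With the other coordinates frozen, the `k`-th summand of `D_i` is `a y / (c + a y)`, where
`a = p_k ^ ht(i) > 0` and `c = 1 + ∑_{j ≠ i} p_k ^ ht(j) s_j > 0` do not depend on `y`
(`Dfun_update`). Each such function is continuous and strictly increasing on `[0, ∞)`, vanishes
at `0` and tends to `1` at infinity, so the sum of the `n ≥ 1` summands has the same properties
with limit `n`. Existence of the solution is then the intermediate value theorem, and uniqueness
is strict monotonicity.
-/

open Finset Filter

lemma Dfun_update (n h : ℕ) (p : Fin n → ℝ) (ht : Fin h → ℕ) (s : Fin h → ℝ) (i : Fin h)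
    (y : ℝ) :
    Dfun n h p ht (Function.update s i y) i =
      ∑ k, p k ^ ht i * y /
        ((1 + ∑ j ∈ univ.erase i, p k ^ ht j * s j) + p k ^ ht i * y) := by
  unfold Dfun
  refine Finset.sum_congr rfl fun k _ => ?_
  rw [← Finset.add_sum_erase univ _ (mem_univ i)]
  have hrest : ∑ j ∈ univ.erase i, p k ^ ht j * Function.update s i y j =
      ∑ j ∈ univ.erase i, p k ^ ht j * s j :=
    Finset.sum_congr rfl fun j hj => by rw [Function.update_of_ne (Finset.ne_of_mem_erase hj)]
  rw [hrest, Function.update_self]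
  congr 1
  ring

lemma saturating_strictMonoOn {a c : ℝ} (ha : 0 < a) (hc : 0 < c) :
    StrictMonoOn (fun y : ℝ => a * y / (c + a * y)) (Set.Ici 0) := by
  intro x hx y hy hxy
  have hx' : 0 ≤ x := hx
  have hy' : 0 ≤ y := hy
  have hmul : 0 < a * c * (y - x) := mul_pos (mul_pos ha hc) (sub_pos.2 hxy)
  change a * x / (c + a * x) < a * y / (c + a * y)
  rw [div_lt_div_iff₀ (by positivity) (by positivity)]
  nlinarith

lemma saturating_continuousOn {a c : ℝ} (ha : 0 < a) (hc : 0 < c) :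
    ContinuousOn (fun y : ℝ => a * y / (c + a * y)) (Set.Ici 0) := by
  refine ContinuousOn.div (by fun_prop) (by fun_prop) fun y hy => ?_
  have hy' : 0 ≤ y := hy
  positivity

lemma saturating_tendsto {a c : ℝ} (ha : 0 < a) (hc : 0 < c) :
    Tendsto (fun y : ℝ => a * y / (c + a * y)) atTop (nhds 1) := by
  have hden : Tendsto (fun y : ℝ => c + a * y) atTop atTop :=
    tendsto_atTop_add_const_left _ _ (tendsto_id.const_mul_atTop ha)
  have hlim : Tendsto (fun y : ℝ => 1 - c / (c + a * y)) atTop (nhds (1 - 0)) :=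
    tendsto_const_nhds.sub (hden.const_div_atTop c)
  rw [sub_zero] at hlim
  refine hlim.congr' ?_
  filter_upwards [eventually_ge_atTop (0 : ℝ)] with y hy
  have hne : c + a * y ≠ 0 := by positivity
  field_simp
  ring

/-- the map `y ↦ D_i(s_1,…,s_{i−1}, y, s_{i+1},…,s_h)` is continuous and
strictly increasing on `[0,∞)`, is `0` at `y = 0`, tends to `n` at `∞`; hence for every
`0 < m_i < n` there is a unique `y > 0` (denoted `G_i(s)`) where it takes the value `m_i`. -/
theorem D_single_coordinate_behavior
    (n h hN : ℕ) (hn : 2 ≤ n) (hh : 2 ≤ h) (hN1 : 1 ≤ hN) (hNh : hN < h)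
    (ht : Fin h → ℕ) (hht : ht = htFlat h hN ∨ ht = htLayer h)
    (p : Fin n → ℝ) (hp : ∀ k, 0 < p k)
    (i : Fin h) (s : Fin h → ℝ) (hs : ∀ j, 0 ≤ s j) :
    ContinuousOn (fun y : ℝ => Dfun n h p ht (Function.update s i y) i) (Set.Ici 0) ∧
    StrictMonoOn (fun y : ℝ => Dfun n h p ht (Function.update s i y) i) (Set.Ici 0) ∧
    Dfun n h p ht (Function.update s i 0) i = 0 ∧
    Tendsto (fun y : ℝ => Dfun n h p ht (Function.update s i y) i) atTop (nhds (n : ℝ)) ∧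
    ∀ mi : ℝ, 0 < mi → mi < n →
      ∃! y : ℝ, 0 < y ∧ Dfun n h p ht (Function.update s i y) i = mi := by
  simp only [Dfun_update]
  have ha : ∀ k, 0 < p k ^ ht i := fun k => pow_pos (hp k) _
  have hc : ∀ k, 0 < 1 + ∑ j ∈ univ.erase i, p k ^ ht j * s j := fun k =>
    add_pos_of_pos_of_nonneg one_pos
      (Finset.sum_nonneg fun j _ => mul_nonneg (pow_pos (hp k) _).le (hs j))
  set F : ℝ → ℝ := fun y => ∑ k, p k ^ ht i * y /
    ((1 + ∑ j ∈ univ.erase i, p k ^ ht j * s j) + p k ^ ht i * y) with hF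
  have hcont : ContinuousOn F (Set.Ici 0) :=
    continuousOn_finsetSum _ fun k _ => saturating_continuousOn (ha k) (hc k)
  have hmono : StrictMonoOn F (Set.Ici 0) := fun x hx y hy hxy =>
    Finset.sum_lt_sum_of_nonempty ⟨⟨0, by omega⟩, mem_univ _⟩
      fun k _ => saturating_strictMonoOn (ha k) (hc k) hx hy hxy
  have hzero : F 0 = 0 := by simp [hF]
  have hlim : Tendsto F atTop (nhds (n : ℝ)) := by
    have hsum := tendsto_finsetSum (univ : Finset (Fin n))
      fun k _ => saturating_tendsto (ha k) (hc k)
    rw [Finset.sum_const, Finset.card_univ, Fintype.card_fin, nsmul_one] at hsum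
    exact hsum
  refine ⟨hcont, hmono, hzero, hlim, fun m hm hmn => ?_⟩
  obtain ⟨b, hb, hb0⟩ := ((hlim.eventually_const_lt hmn).and (eventually_ge_atTop 0)).exists
  obtain ⟨y, hy, hym⟩ := intermediate_value_Icc hb0
    (hcont.mono Set.Icc_subset_Ici_self) ⟨hzero.le.trans hm.le, hb.le⟩
  have hy0 : y ≠ 0 := by
    rintro rfl
    exact hm.ne (hzero.symm.trans hym)
  exact ⟨y, ⟨lt_of_le_of_ne hy.1 hy0.symm, hym⟩, fun z hz =>
    hmono.injOn (Set.mem_Ici.2 hz.1.le) (Set.mem_Ici.2 hy.1) (hz.2.trans hym.symm)⟩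
end

section
/- Assume 0 < m_i < n for all i. For every s ∈ [0,∞)^h, every real λ > 1 and every i ∈ {1,…,h}: G_i(λs) < λ·G_i(s), where λs = (λs_1,…,λs_h). -/
/-!
Write `y = G_i(s)` and `z = G_i(λs)`. In each summand of `D_i` split off the `i`-th term of the
denominator, with `a = p_k^{ht(i)}`, leaving
`A = Σ_{j≠i} p_k^{ht(j)} s_j ≥ 0`. If `λy ≤ z`, then every summand satisfies
`a y / (1 + A + a y) < a z / (1 + λA + a z)`: scaling everything by `λ > 1` reduces the relative
weight of the constant `1`, and a further increase of the `i`-th coordinate only helps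
(`term_lt`). Summing over `k` gives `m_i < m_i`, a contradiction.
-/

open Finset Filter

/-- The denominator of `Dfun` with the updated coordinate split off. -/
lemma sum_update_split {h : ℕ} (q s : Fin h → ℝ) (i : Fin h) (y : ℝ) :
    ∑ j, q j * Function.update s i y j = (∑ j ∈ univ.erase i, q j * s j) + q i * y := by
  rw [← Finset.sum_erase_add univ _ (mem_univ i), Function.update_self]
  congr 1
  refine Finset.sum_congr rfl fun j hj => ?_
  rw [Function.update_of_ne (Finset.ne_of_mem_erase hj)]

/-- Strict growth of a single summand of `Dfun` when the other coordinates are scaled by `lam > 1`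
and the distinguished one grows at least by the factor `lam`. -/
lemma term_lt {a A y z lam : ℝ} (ha : 0 < a) (hA : 0 ≤ A) (hy : 0 < y) (hlam : 1 < lam)
    (hz : lam * y ≤ z) :
    a * y / (1 + (A + a * y)) < a * z / (1 + (lam * A + a * z)) := by
  have hyz : y < z := by nlinarith
  have hz0 : 0 < z := hy.trans hyz
  have hlamA : 0 ≤ lam * A := mul_nonneg (by linarith) hA
  rw [div_lt_div_iff₀ (by positivity) (by positivity)]
  have h1 : lam * y * A ≤ z * A := mul_le_mul_of_nonneg_right hz hA
  have h2 : 0 < a * ((z - y) + (z * A - lam * y * A)) := mul_pos ha (by linarith)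
  linarith [h2]

/-- the implicit map `G` is strictly subhomogeneous: for every `s ∈ [0,∞)^h`,
every `λ > 1` and every `i`, `G_i(λs) < λ·G_i(s)`. -/
theorem G_strictly_subhomogeneous
    (n h hN : ℕ) (hn : 2 ≤ n) (hh : 2 ≤ h) (hN1 : 1 ≤ hN) (hNh : hN < h)
    (ht : Fin h → ℕ) (hht : ht = htFlat h hN ∨ ht = htLayer h)
    (p : Fin n → ℝ) (hp : ∀ k, 0 < p k)
    (m : Fin h → ℝ) (hm : ∀ i, 0 < m i ∧ m i < n)
    (G : (Fin h → ℝ) → Fin h → ℝ)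
    (hG : ∀ s : Fin h → ℝ, (∀ j, 0 ≤ s j) → ∀ i,
      0 < G s i ∧ Dfun n h p ht (Function.update s i (G s i)) i = m i)
    (s : Fin h → ℝ) (hs : ∀ j, 0 ≤ s j) (lam : ℝ) (hlam : 1 < lam) :
    ∀ i, G (fun j => lam * s j) i < lam * G s i := by
  intro i
  by_contra! hle
  obtain ⟨hy, hD⟩ := hG s hs i
  obtain ⟨-, hDlam⟩ := hG (fun j => lam * s j)
    (fun j => mul_nonneg (by linarith) (hs j)) i
  refine lt_irrefl (m i) ?_
  conv_lhs => rw [← hD]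
  rw [← hDlam]
  unfold Dfun
  refine Finset.sum_lt_sum_of_nonempty ⟨⟨0, by omega⟩, mem_univ _⟩ fun k _ => ?_
  rw [sum_update_split, sum_update_split, Function.update_self, Function.update_self]
  have hscale : ∑ j ∈ univ.erase i, p k ^ ht j * (lam * s j)
      = lam * ∑ j ∈ univ.erase i, p k ^ ht j * s j := by
    rw [Finset.mul_sum]
    exact Finset.sum_congr rfl fun j _ => by ring
  rw [hscale]
  exact term_lt (pow_pos (hp k) _)
    (Finset.sum_nonneg fun j _ => mul_nonneg (pow_pos (hp k) _).le (hs j)) hy hlam hle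
end
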